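/- Let K be a compact metric space and σ: K^ℤ → K^ℤ the full shift on the alphabet K. Then mdim(K^ℤ, σ) ≤ dim K. -/

import Mathlib

open Filter Set
open scoped ENNReal

namespace MeanDimPaper

variable {X : Type*} [TopologicalSpace X]

/-- `α` is an open cover of `X`. -/
def IsOpenCover (α : Set (Set X)) : Prop :=
  (∀ U ∈ α, IsOpen U) ∧ ⋃₀ α = Set.univ

/-- The order of a cover `α`: the maximum `n ≥ 0` such that there exist `n + 1`
pairwise distinct members of `α` with nonempty common intersection. -/
noncomputable def ord (α : Set (Set X)) : ℕ∞ :=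
  ⨆ n ∈ {n : ℕ | ∃ f : Fin (n + 1) → Set X,
      Function.Injective f ∧ (∀ i, f i ∈ α) ∧ (⋂ i, f i).Nonempty}, (n : ℕ∞)

/-- `β` refines `α`: every member of `β` is contained in some member of `α`. -/
def Refines (β α : Set (Set X)) : Prop := ∀ V ∈ β, ∃ U ∈ α, V ⊆ U

/-- `D(α)`: the minimum of `ord β` over open covers `β` refining `α`. -/
noncomputable def covD (α : Set (Set X)) : ℕ∞ :=
  ⨅ β ∈ {β : Set (Set X) | IsOpenCover β ∧ Refines β α}, ord β

/-- Topological (covering) dimension: the supremum of `D(α)` over open covers `α`. -/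
noncomputable def topDim (X : Type*) [TopologicalSpace X] : ℕ∞ :=
  ⨆ α ∈ {α : Set (Set X) | IsOpenCover α}, covD α

/-- Diameter of a set with respect to a distance function `d`. -/
noncomputable def diamD (d : X → X → ℝ) (U : Set X) : ℝ :=
  sSup {r | ∃ x ∈ U, ∃ y ∈ U, r = d x y}

/-- Mesh of a cover: the supremum of the diameters of its members. -/
noncomputable def mesh (d : X → X → ℝ) (α : Set (Set X)) : ℝ :=
  sSup (diamD d '' α)

/-- `widim_ε(X, d)`: the minimum of `D(α)` over open covers `α` with `mesh(α, d) < ε`. -/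
noncomputable def widim (ε : ℝ) (d : X → X → ℝ) : ℕ∞ :=
  ⨅ α ∈ {α : Set (Set X) | IsOpenCover α ∧ mesh d α < ε}, covD α

/-- `d` is a metric on `X` compatible with the topology of `X`. -/
structure IsCompatMetric {X : Type*} [TopologicalSpace X] (d : X → X → ℝ) : Prop where
  refl : ∀ x, d x x = 0
  eq_of : ∀ x y, d x y = 0 → x = y
  symm : ∀ x y, d x y = d y x
  triangle : ∀ x y z, d x z ≤ d x y + d y z
  isOpen_iff : ∀ U : Set X, IsOpen U ↔ ∀ x ∈ U, ∃ ε > 0, ∀ y, d x y < ε → y ∈ U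

/-- The dynamical distance `d_n(x, y) = max_{0 ≤ i < n} d(Tⁱ x, Tⁱ y)`. -/
noncomputable def dynDist (d : X → X → ℝ) (T : X → X) (n : ℕ) (x y : X) : ℝ :=
  sSup {r | ∃ i < n, r = d (T^[i] x) (T^[i] y)}

/-- Mean dimension `mdim(X, T)` computed with the metric `d`:
`lim_{ε → 0} lim_{n → ∞} widim_ε(X, d_n) / n`.  The inner limit exists (by
subadditivity of `n ↦ widim_ε(X, d_n)`) so it coincides with the liminf, and the inner
quantity is monotone as `ε` decreases, so the limit as `ε → 0` is the supremum over
`ε > 0`. -/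
noncomputable def mdim (T : X → X) (d : X → X → ℝ) : ℝ≥0∞ :=
  ⨆ (ε : ℝ) (_ : 0 < ε),
    Filter.liminf (fun n : ℕ => (widim ε (dynDist d T n) : ℝ≥0∞) / (n : ℝ≥0∞)) Filter.atTop

/-- The full shift `σ` on the alphabet `K`: `σ((xₙ)ₙ) = (xₙ₊₁)ₙ`. -/
def shift (K : Type*) : (ℤ → K) → ℤ → K := fun x n => x (n + 1)

/-!
The colouring argument of Kolmogorov and Ostrand. Let `β` be a finite open cover of a compact
normal space, `ρ` a partition of unity subordinate to it, and give every colour `c` its own real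
weights `w (c, i)`. The sets on which one of the functions `exp (w (c, i)) * ρ i` strictly dominates
the others form a disjoint family refining `β`, and this family misses a point `x` only if two of
the functions tie there, so that `w (c, i) - w (c, j) = log (ρ j x) - log (ρ i x)`. At most
`ord β + 1` of the `ρ i x` are positive, so the right-hand sides lie in a `ℚ`-vector space of
dimension `ord β`; if all the weights are linearly independent over `ℚ`, then at most `ord β`
colours miss `x`, however many colours there are.

In a finite product of spaces with covers `α i`, take `N + 1` colours with `N = ∑ i, covD (α i)`.
The coordinates of a point together miss at most `N` colours, so boxes with all sides of one colour
cover the product, with order at most `N`. For the full shift, the dynamical distance `d_n` is small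
on boxes that are small in a window of `n + O(1)` coordinates.
-/

section Covers

variable {E : Type*}

lemma Refines.trans {α β γ : Set (Set E)} (h₁ : Refines α β) (h₂ : Refines β γ) :
    Refines α γ := fun U hU =>
  let ⟨V, hV, hUV⟩ := h₁ U hU
  let ⟨W, hW, hVW⟩ := h₂ V hV
  ⟨W, hW, hUV.trans hVW⟩

lemma card_le_ord_add_one {β : Set (Set E)} {S : Finset (Set E)} {x : E}
    (hS : ∀ U ∈ S, U ∈ β ∧ x ∈ U) : (S.card : ℕ∞) ≤ ord β + 1 := by
  rcases hn : S.card with _ | n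
  · exact bot_le
  let e := S.equivFinOfCardEq hn
  have hmem : ∃ f : Fin (n + 1) → Set E,
      Function.Injective f ∧ (∀ i, f i ∈ β) ∧ (⋂ i, f i).Nonempty :=
    ⟨fun i => e.symm i, Subtype.val_injective.comp e.symm.injective,
      fun i => (hS _ (e.symm i).2).1, x, mem_iInter.2 fun i => (hS _ (e.symm i).2).2⟩
  rw [Nat.cast_succ]
  gcongr
  exact le_iSup₂ (f := fun (n : ℕ) (_ : n ∈ {n : ℕ | ∃ f : Fin (n + 1) → Set E,
    Function.Injective f ∧ (∀ i, f i ∈ β) ∧ (⋂ i, f i).Nonempty}) => (n : ℕ∞)) n hmem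

lemma ord_iUnion_le {N : ℕ} {F : Fin (N + 1) → Set (Set E)}
    (hF : ∀ c, (F c).PairwiseDisjoint id) : ord (⋃ c, F c) ≤ N := by
  refine iSup₂_le fun n ⟨f, hf, hfF, x, hx⟩ => ?_
  choose c hc using fun i => mem_iUnion.1 (hfF i)
  have hc_inj : Function.Injective c := fun i j hij =>
    hf <| (hF (c i)).elim_set (hc i) (hij ▸ hc j) x (mem_iInter.1 hx i) (mem_iInter.1 hx j)
  have hcard : n + 1 ≤ N + 1 := by simpa using Fintype.card_le_of_injective c hc_inj
  exact_mod_cast Nat.le_of_succ_le_succ hcard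

lemma covD_le_ord {α β : Set (Set X)} (hβ : IsOpenCover β) (hβα : Refines β α) :
    covD α ≤ ord β :=
  iInf₂_le β ⟨hβ, hβα⟩

lemma covD_le_topDim {α : Set (Set X)} (hα : IsOpenCover α) : covD α ≤ topDim X :=
  le_iSup₂ (f := fun (γ : Set (Set X)) (_ : γ ∈ {γ | IsOpenCover γ}) => covD γ) α hα

lemma widim_le_covD {d : X → X → ℝ} {ε : ℝ} {α : Set (Set X)} (hα : IsOpenCover α)
    (hmesh : mesh d α < ε) : widim ε d ≤ covD α :=
  iInf₂_le α ⟨hα, hmesh⟩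

lemma exists_refines_ord_eq_covD {α : Set (Set X)} (hα : IsOpenCover α) :
    ∃ β, IsOpenCover β ∧ Refines β α ∧ ord β = covD α := by
  have : Nonempty {β : Set (Set X) | IsOpenCover β ∧ Refines β α} :=
    ⟨α, hα, fun V hV => ⟨V, hV, Subset.rfl⟩⟩
  obtain ⟨⟨β, hβ, hβα⟩, h⟩ :=
    ciInf_mem fun β : {β : Set (Set X) | IsOpenCover β ∧ Refines β α} => ord β.1
  exact ⟨β, hβ, hβα, h.trans iInf_subtype⟩

end Covers

section GeneralPosition

variable {R M ι κ : Type*} [Ring R] [AddCommGroup M] [Module R M]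

lemma linearIndependent_sub_of_ne {w : κ × ι → M} (hw : LinearIndependent R w)
    {i j : κ → ι} (hij : ∀ c, i c ≠ j c) :
    LinearIndependent R fun c => w (c, i c) - w (c, j c) := by
  classical
  have hsingle : LinearIndependent R fun c =>
      Finsupp.single (c, i c) (1 : R) - Finsupp.single (c, j c) 1 := by
    rw [linearIndependent_iff']
    intro s g hg c hc
    have hcoord := DFunLike.congr_fun hg (c, i c)
    rw [Finsupp.finsetSum_apply, Finset.sum_eq_single_of_mem c hc] at hcoord
    · simpa [(hij c).symm] using hcoord
    · intro b _ hbc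
      simp [hbc]
  have hker : LinearMap.ker (Finsupp.linearCombination R w) = ⊥ :=
    LinearMap.ker_eq_bot.2 hw
  simpa [Function.comp_def] using hsingle.map' _ hker

lemma card_lt_card_of_forall_exists_add_eq_add [StrongRankCondition R]
    {w : κ × ι → M} (hw : LinearIndependent R w) (t : ι → M) {P : Finset ι} (hP : P.Nonempty)
    {C : Finset κ}
    (htie : ∀ c ∈ C, ∃ i ∈ P, ∃ j ∈ P, i ≠ j ∧ w (c, i) + t i = w (c, j) + t j) :
    C.card < P.card := by
  classical
  have : Nontrivial R := nontrivial_of_invariantBasisNumber R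
  obtain ⟨k, hk⟩ := hP
  choose i hi j hj hij heq using fun c : C => htie c c.2
  have hind : LinearIndependent R fun c : C => w (c, i c) - w (c, j c) :=
    linearIndependent_sub_of_ne (w := w ∘ Prod.map Subtype.val id)
      (hw.comp _ (Subtype.val_injective.prodMap Function.injective_id)) hij
  let D : Finset M := (P.erase k).image fun l => t l - t k
  have ht : ∀ l ∈ P, t l - t k ∈ Submodule.span R (D : Set M) := fun l hl => by
    by_cases hlk : l = k
    · simp [hlk]
    · exact Submodule.subset_span <| Finset.mem_coe.2 <| Finset.mem_image_of_mem _ <|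
        Finset.mem_erase.2 ⟨hlk, hl⟩
  have hspan : Submodule.span R (range fun c : C => w (c, i c) - w (c, j c)) ≤
      Submodule.span R D := by
    rw [Submodule.span_le]
    rintro _ ⟨c, rfl⟩
    have hsub : w (c, i c) - w (c, j c) = (t (j c) - t k) - (t (i c) - t k) := by
      rw [sub_sub_sub_cancel_right, sub_eq_sub_iff_add_eq_add, heq c, add_comm]
    change w (c, i c) - w (c, j c) ∈ _
    rw [hsub]
    exact sub_mem (ht _ (hj c)) (ht _ (hi c))
  calc C.card
      = Module.finrank R (Submodule.span R (range fun c : C => w (c, i c) - w (c, j c))) := by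
        rw [finrank_span_eq_card hind, Fintype.card_coe]
    _ ≤ Module.finrank R (Submodule.span R (D : Set M)) := Submodule.finrank_mono hspan
    _ ≤ D.card := finrank_span_finset_le_card D
    _ ≤ (P.erase k).card := Finset.card_image_le
    _ < P.card := Finset.card_erase_lt_of_mem hk

lemma exists_linearIndependent_rat_real (σ : Type*) [Countable σ] :
    ∃ w : σ → ℝ, LinearIndependent ℚ w := by
  let b := Module.Basis.ofVectorSpace ℚ ℝ
  have hle : Cardinal.lift.{0} (Cardinal.mk σ) ≤
      Cardinal.lift (Cardinal.mk (Module.Basis.ofVectorSpaceIndex ℚ ℝ)) := by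
    rw [b.mk_eq_rank'', Real.rank_rat_real, Cardinal.lift_continuum, Cardinal.lift_uzero]
    exact Cardinal.mk_le_aleph0.trans Cardinal.aleph0_le_continuum
  obtain ⟨e⟩ := Cardinal.lift_mk_le'.1 hle
  exact ⟨b ∘ e, b.linearIndependent.comp e e.injective⟩

end GeneralPosition

section DominanceCells

variable {E ι : Type*}

/-- The region where the function `ρ i`, scaled by `exp (w i)`, is positive and strictly exceeds
every other scaled `ρ j`. For fixed weights `w` these regions are disjoint; their common
complement is, in logarithmic coordinates, a tropical hyperplane. -/
def dominanceCell (ρ : ι → E → ℝ) (w : ι → ℝ) (i : ι) : Set E :=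
  {x | 0 < ρ i x ∧ ∀ j ≠ i, Real.exp (w j) * ρ j x < Real.exp (w i) * ρ i x}

lemma isOpen_dominanceCell [Finite ι] {ρ : ι → X → ℝ} (hρ : ∀ i, Continuous (ρ i))
    (w : ι → ℝ) (i : ι) : IsOpen (dominanceCell ρ w i) := by
  have hrw : dominanceCell ρ w i = {x | 0 < ρ i x} ∩
      ⋂ j, ⋂ _ : j ≠ i, {x | Real.exp (w j) * ρ j x < Real.exp (w i) * ρ i x} := by
    ext x
    simp only [dominanceCell, mem_inter_iff, mem_iInter, mem_ofPred_eq]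
  rw [hrw]
  exact (isOpen_lt continuous_const (hρ i)).inter <|
    isOpen_iInter_of_finite fun j => isOpen_iInter_of_finite fun _ =>
      isOpen_lt ((hρ j).const_mul _) ((hρ i).const_mul _)

lemma pairwise_disjoint_dominanceCell (ρ : ι → E → ℝ) (w : ι → ℝ) :
    Pairwise (Function.onFun Disjoint (dominanceCell ρ w)) := fun i j hij =>
  Set.disjoint_left.2 fun _ hi hj => lt_asymm (hi.2 j hij.symm) (hj.2 i hij)

lemma exists_tie_of_notMem_dominanceCell [Finite ι] {ρ : ι → E → ℝ} {w : ι → ℝ} {x : E}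
    (hpos : ∃ i, 0 < ρ i x) (hx : ∀ i, x ∉ dominanceCell ρ w i) :
    ∃ i, 0 < ρ i x ∧ ∃ j, 0 < ρ j x ∧ i ≠ j ∧
      w i + Real.log (ρ i x) = w j + Real.log (ρ j x) := by
  obtain ⟨k, hk⟩ := hpos
  have : Nonempty ι := ⟨k⟩
  obtain ⟨i, hmax⟩ := Finite.exists_max fun i => Real.exp (w i) * ρ i x
  have hexp : ∀ l, 0 < Real.exp (w l) * ρ l x ↔ 0 < ρ l x := fun l =>
    mul_pos_iff_of_pos_left (Real.exp_pos _)
  have hi : 0 < ρ i x := (hexp i).1 (((hexp k).2 hk).trans_le (hmax k))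
  obtain ⟨j, hji, hle⟩ : ∃ j ≠ i, Real.exp (w i) * ρ i x ≤ Real.exp (w j) * ρ j x := by
    by_contra! h
    exact hx i ⟨hi, h⟩
  have hj : 0 < ρ j x := (hexp j).1 (((hexp i).2 hi).trans_le hle)
  refine ⟨i, hi, j, hj, hji.symm, ?_⟩
  have hlog := congrArg Real.log (le_antisymm hle (hmax j))
  rwa [Real.log_mul (Real.exp_ne_zero _) hi.ne', Real.log_mul (Real.exp_ne_zero _) hj.ne',
    Real.log_exp, Real.log_exp] at hlog

lemma card_lt_card_of_forall_notMem_dominanceCell {κ : Type*} [Finite ι] {ρ : ι → E → ℝ}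
    {w : κ × ι → ℝ} (hw : LinearIndependent ℚ w) {x : E} (hpos : ∃ i, 0 < ρ i x)
    {P : Finset ι} (hP : ∀ i, 0 < ρ i x → i ∈ P) {C : Finset κ}
    (hC : ∀ c ∈ C, ∀ i, x ∉ dominanceCell ρ (fun j => w (c, j)) i) : C.card < P.card := by
  refine card_lt_card_of_forall_exists_add_eq_add hw (fun i => Real.log (ρ i x))
    (hpos.imp hP) fun c hc => ?_
  obtain ⟨i, hi, j, hj, hij, heq⟩ := exists_tie_of_notMem_dominanceCell hpos (hC c hc)
  exact ⟨i, hP i hi, j, hP j hj, hij, heq⟩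

end DominanceCells

section Ostrand

variable {κ : Type*}

theorem exists_pairwiseDisjoint_refines_encard_le_ord [CompactSpace X] [NormalSpace X] [Finite κ]
    {β : Set (Set X)} (hβ : IsOpenCover β) :
    ∃ F : κ → Set (Set X), (∀ c, (F c).PairwiseDisjoint id) ∧ (∀ c, ∀ V ∈ F c, IsOpen V) ∧
      (∀ c, Refines (F c) β) ∧ ∀ x, {c | x ∉ ⋃₀ F c}.encard ≤ ord β := by
  classical
  obtain ⟨B, hBβ, hB_fin, hB_cover⟩ :=
    isCompact_univ.elim_finite_subcover_image (b := β) (c := id) hβ.1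
      (by rw [← hβ.2, sUnion_eq_biUnion]; rfl)
  have : Fintype B := hB_fin.fintype
  obtain ⟨ρ, hρ⟩ := PartitionOfUnity.exists_isSubordinate_of_locallyFinite isClosed_univ
    (fun U : B => (U : Set X)) (fun U => hβ.1 U (hBβ U.2)) (locallyFinite_of_finite _)
    (by simpa only [biUnion_eq_iUnion, id] using hB_cover)
  have hρ_mem : ∀ {U : B} {x : X}, 0 < ρ U x → x ∈ (U : Set X) := fun {U x} hpos =>
    hρ U <| subset_tsupport _ hpos.ne'
  obtain ⟨w, hw⟩ := exists_linearIndependent_rat_real (κ × B)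
  let cell (c : κ) : B → Set X := dominanceCell (fun U => ρ U) fun U => w (c, U)
  refine ⟨fun c => range (cell c), fun c => ?_, ?_, ?_, fun x => ?_⟩
  · exact (pairwise_disjoint_dominanceCell _ _).range_pairwise
  · rintro c _ ⟨U, rfl⟩
    exact isOpen_dominanceCell (fun V => (ρ V).continuous) _ U
  · rintro c _ ⟨U, rfl⟩
    exact ⟨U, hBβ U.2, fun x hx => hρ_mem hx.1⟩
  · let P : Finset B := {U | 0 < ρ U x}
    let C : Finset κ := (Set.toFinite {c | x ∉ ⋃₀ range (cell c)}).toFinset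
    have hCP : C.card < P.card := card_lt_card_of_forall_notMem_dominanceCell hw
      (ρ.exists_pos (mem_univ x)) (by simp [P]) (by simp [C, cell])
    have hP : (P.card : ℕ∞) ≤ ord β + 1 := by
      rw [← Finset.card_map (Function.Embedding.subtype _)]
      exact card_le_ord_add_one (x := x) <| Finset.forall_mem_map.2 fun U hU =>
        ⟨hBβ U.2, hρ_mem (by simpa [P] using hU)⟩
    rw [(Set.toFinite _).encard_eq_coe_toFinset_card,
      ← ENat.add_le_add_iff_right (ENat.natCast_ne_top 1)]
    exact (by exact_mod_cast hCP : (C.card + 1 : ℕ∞) ≤ P.card).trans hP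

theorem exists_pairwiseDisjoint_refines_encard_le_covD [CompactSpace X] [NormalSpace X] [Finite κ]
    {α : Set (Set X)} (hα : IsOpenCover α) :
    ∃ F : κ → Set (Set X), (∀ c, (F c).PairwiseDisjoint id) ∧ (∀ c, ∀ V ∈ F c, IsOpen V) ∧
      (∀ c, Refines (F c) α) ∧ ∀ x, {c | x ∉ ⋃₀ F c}.encard ≤ covD α := by
  obtain ⟨β, hβ, hβα, hord⟩ := exists_refines_ord_eq_covD hα
  obtain ⟨F, hdisj, hopen, hFβ, hmiss⟩ := exists_pairwiseDisjoint_refines_encard_le_ord (κ := κ) hβ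
  exact ⟨F, hdisj, hopen, fun c => (hFβ c).trans hβα, fun x => hord ▸ hmiss x⟩

end Ostrand

section BoxCovers

variable {ι : Type*} {Y : ι → Type*}

/-- The join over `i ∈ A` of the pullbacks of the covers `α i` to a product space: its members are
the boxes with side in `α i` in each direction `i ∈ A`, unrestricted in the other directions. -/
def boxCover (A : Set ι) (α : ∀ i, Set (Set (Y i))) : Set (Set (∀ i, Y i)) :=
  A.pi '' A.pi α

lemma exists_mem_boxCover {A : Set ι} {α : ∀ i, Set (Set (Y i))} {x : ∀ i, Y i}
    (hx : ∀ i ∈ A, x i ∈ ⋃₀ α i) : ∃ W ∈ boxCover A α, x ∈ W := by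
  choose! s hs hxs using hx
  exact ⟨A.pi s, mem_image_of_mem _ hs, hxs⟩

lemma isOpen_of_mem_boxCover [∀ i, TopologicalSpace (Y i)] {A : Finset ι}
    {α : ∀ i, Set (Set (Y i))} (hα : ∀ i, ∀ U ∈ α i, IsOpen U) {W : Set (∀ i, Y i)}
    (hW : W ∈ boxCover A α) : IsOpen W := by
  obtain ⟨s, hs, rfl⟩ := hW
  exact isOpen_set_pi A.finite_toSet fun i hi => hα i _ (hs i hi)

lemma isOpenCover_boxCover [∀ i, TopologicalSpace (Y i)] (A : Finset ι)
    {α : ∀ i, Set (Set (Y i))} (hα : ∀ i, IsOpenCover (α i)) : IsOpenCover (boxCover A α) :=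
  ⟨fun _ hW => isOpen_of_mem_boxCover (fun i => (hα i).1) hW,
    eq_univ_of_forall fun _ => exists_mem_boxCover fun i _ => (hα i).2 ▸ mem_univ _⟩

lemma pairwiseDisjoint_boxCover {A : Set ι} {α : ∀ i, Set (Set (Y i))}
    (hα : ∀ i, (α i).PairwiseDisjoint id) : (boxCover A α).PairwiseDisjoint id := by
  refine Set.pairwiseDisjoint_iff.2 ?_
  rintro _ ⟨s, hs, rfl⟩ _ ⟨t, ht, rfl⟩ ⟨x, hxs, hxt⟩
  exact Set.pi_congr rfl fun i hi =>
    (hα i).elim_set (hs i hi) (ht i hi) (x i) (hxs i hi) (hxt i hi)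

lemma refines_boxCover {A : Set ι} {α β : ∀ i, Set (Set (Y i))}
    (h : ∀ i, Refines (α i) (β i)) : Refines (boxCover A α) (boxCover A β) := by
  rintro _ ⟨s, hs, rfl⟩
  choose! t ht hst using fun i (hi : i ∈ A) => h i (s i) (hs i hi)
  exact ⟨A.pi t, mem_image_of_mem _ ht, Set.pi_mono hst⟩

theorem covD_boxCover_le [∀ i, TopologicalSpace (Y i)] [∀ i, CompactSpace (Y i)]
    [∀ i, NormalSpace (Y i)] (A : Finset ι) {α : ∀ i, Set (Set (Y i))}
    (hα : ∀ i, IsOpenCover (α i)) : covD (boxCover A α) ≤ ∑ i ∈ A, covD (α i) := by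
  rcases eq_or_ne (∑ i ∈ A, covD (α i)) ⊤ with htop | hfin
  · exact htop ▸ le_top
  obtain ⟨N, hN⟩ := ENat.ne_top_iff_exists.1 hfin
  rw [← hN]
  choose F hdisj hopen hFα hmiss using fun i =>
    exists_pairwiseDisjoint_refines_encard_le_covD (κ := Fin (N + 1)) (hα i)
  -- The coordinates of `x` together miss at most `N` of the `N + 1` colours.
  have hcolour (x : ∀ i, Y i) : ∃ c, ∀ i ∈ A, x i ∈ ⋃₀ F i c := by
    by_contra! h
    have hle : ((N + 1 : ℕ) : ℕ∞) ≤ N := calc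
      ((N + 1 : ℕ) : ℕ∞) = (univ : Set (Fin (N + 1))).encard := by simp
      _ ≤ (⋃ i ∈ A, {c | x i ∉ ⋃₀ F i c}).encard :=
        encard_le_encard fun c _ => by simpa using h c
      _ ≤ ∑ i ∈ A, {c | x i ∉ ⋃₀ F i c}.encard := A.set_encard_biUnion_le _
      _ ≤ ∑ i ∈ A, covD (α i) := Finset.sum_le_sum fun i _ => hmiss i (x i)
      _ = N := hN.symm
    exact absurd (ENat.natCast_le_natCast.1 hle) (Nat.not_succ_le_self N)
  have hcover : IsOpenCover (⋃ c, boxCover A fun i => F i c) := by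
    refine ⟨fun W hW => ?_, eq_univ_of_forall fun x => ?_⟩
    · obtain ⟨c, hc⟩ := mem_iUnion.1 hW
      exact isOpen_of_mem_boxCover (fun i => hopen i c) hc
    · obtain ⟨c, hc⟩ := hcolour x
      obtain ⟨W, hW, hxW⟩ := exists_mem_boxCover hc
      exact ⟨W, mem_iUnion.2 ⟨c, hW⟩, hxW⟩
  have hrefines : Refines (⋃ c, boxCover A fun i => F i c) (boxCover A α) := fun W hW =>
    let ⟨c, hc⟩ := mem_iUnion.1 hW
    refines_boxCover (fun i => hFα i c) W hc
  exact (covD_le_ord hcover hrefines).trans <|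
    ord_iUnion_le fun c => pairwiseDisjoint_boxCover fun i => hdisj i c

lemma covD_boxCover_const_le [CompactSpace X] [NormalSpace X] (A : Finset ι) {α : Set (Set X)}
    (hα : IsOpenCover α) : covD (boxCover A fun _ : ι => α) ≤ A.card * covD α := by
  simpa using covD_boxCover_le A fun _ => hα

lemma exists_boxCover_prod_self_subset [CompactSpace X] {D : Set ((ι → X) × (ι → X))}
    (hD : IsOpen D) (hdiag : ∀ x, (x, x) ∈ D) :
    ∃ (A : Finset ι) (α : Set (Set X)), IsOpenCover α ∧
      ∀ W ∈ boxCover A fun _ => α, W ×ˢ W ⊆ D := by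
  classical
  have hbox (x : ι → X) : ∃ (I : Finset ι) (u : ι → Set X),
      (∀ i ∈ I, IsOpen (u i) ∧ x i ∈ u i) ∧ (I : Set ι).pi u ×ˢ (I : Set ι).pi u ⊆ D := by
    obtain ⟨O, hO, hxO, hOD⟩ := exists_nhds_square (hD.mem_nhds (hdiag x))
    obtain ⟨I, u, hu, huO⟩ := isOpen_pi_iff.1 hO x hxO
    exact ⟨I, u, hu, (Set.prod_mono huO huO).trans hOD⟩
  choose I u hu huD using hbox
  obtain ⟨T, hT⟩ := finite_cover_nhds fun x =>
    (isOpen_set_pi (I x).finite_toSet fun i hi => (hu x i hi).1).mem_nhds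
      fun i hi => (hu x i hi).2
  -- `nbhd p` is the intersection of all sides containing `p` of the boxes centred in `T`.
  let nbhd (p : X) : Set X := ⋂ x ∈ T, ⋂ i ∈ I x, ⋂ _ : p ∈ u x i, u x i
  refine ⟨T.biUnion I, range nbhd, ⟨?_, ?_⟩, ?_⟩
  · rintro _ ⟨p, rfl⟩
    exact isOpen_biInter_finset fun x _ => isOpen_biInter_finset fun i hi =>
      isOpen_iInter_of_finite fun _ => (hu x i hi).1
  · exact eq_univ_of_forall fun p => ⟨nbhd p, mem_range_self p, by simp [nbhd]⟩
  · rintro _ ⟨s, hs, rfl⟩ ⟨y, z⟩ ⟨hy, hz⟩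
    choose p hp using hs
    -- The box `W` lies in any box centred in `T` that contains the point with coordinates `p i`.
    let q : ι → X := fun i => if hi : i ∈ T.biUnion I then p i hi else y i
    obtain ⟨x, hxT, hqx⟩ := mem_iUnion₂.1 (hT ▸ mem_univ q : q ∈ ⋃ x ∈ T, (I x : Set ι).pi (u x))
    have hsub (i : ι) (hi : i ∈ I x) : s i ⊆ u x i := by
      have hiA : i ∈ T.biUnion I := Finset.mem_biUnion.2 ⟨x, hxT, hi⟩
      have hpi : p i hiA ∈ u x i := by simpa only [q, dif_pos hiA] using hqx i hi
      rw [← hp i hiA]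
      exact (biInter_subset_of_mem hxT).trans <|
        (biInter_subset_of_mem hi).trans <| iInter_subset _ hpi
    exact huD x ⟨fun i hi => hsub i hi (hy i (Finset.mem_biUnion.2 ⟨x, hxT, hi⟩)),
      fun i hi => hsub i hi (hz i (Finset.mem_biUnion.2 ⟨x, hxT, hi⟩))⟩

end BoxCovers

section FullShift

lemma IsCompatMetric.continuous {d : X → X → ℝ} (hd : IsCompatMetric d) :
    Continuous fun p : X × X => d p.1 p.2 :=
  letI : MetricSpace X :=
    .ofDistTopology d hd.refl hd.symm hd.triangle hd.isOpen_iff hd.eq_of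
  continuous_dist

lemma liminf_div_natCast_le {a : ℕ → ℝ≥0∞} {b : ℝ≥0∞} {L : ℕ}
    (h : ∀ n, a n ≤ (n + L : ℕ) * b) : liminf (fun n => a n / n) atTop ≤ b := by
  have hlim : Tendsto (fun n : ℕ => (1 + (L : ℝ≥0∞) / n) * b) atTop (nhds b) := by
    have hdiv : Tendsto (fun n : ℕ => (L : ℝ≥0∞) / n) atTop (nhds 0) := by
      simpa using ENNReal.Tendsto.const_div ENNReal.tendsto_nat_nhds_top
        (Or.inr (ENNReal.natCast_ne_top L))
    simpa using ENNReal.Tendsto.mul_const (hdiv.const_add 1) (b := b) (by simp)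
  rw [← hlim.liminf_eq]
  refine liminf_le_liminf ?_
  filter_upwards [eventually_ne_atTop 0] with n hn
  calc a n / n ≤ (n + L : ℕ) * b / n := by gcongr; exact h n
    _ = (1 + (L : ℝ≥0∞) / n) * b := by
      rw [ENNReal.mul_div_right_comm, Nat.cast_add, ENNReal.add_div,
        ENNReal.div_self (Nat.cast_ne_zero.2 hn) (ENNReal.natCast_ne_top n)]

variable {K : Type*}

lemma shift_iterate_apply (n : ℕ) (x : ℤ → K) (i : ℤ) : (shift K)^[n] x i = x (i + n) := by
  induction n generalizing x with
  | zero => simp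
  | succ n ih =>
    rw [Function.iterate_succ_apply, ih, shift, Nat.cast_succ, add_assoc]

lemma exists_mem_boxCover_mapsTo_shift_iterate {A B : Set ℤ} {α : Set (Set K)} {n : ℕ}
    (hAB : ∀ i ∈ A, i + n ∈ B) {W : Set (ℤ → K)} (hW : W ∈ boxCover B fun _ => α) :
    ∃ W' ∈ boxCover A fun _ => α, MapsTo (shift K)^[n] W W' := by
  obtain ⟨s, hs, rfl⟩ := hW
  refine ⟨A.pi fun i => s (i + n), mem_image_of_mem _ fun i hi => hs _ (hAB i hi),
    fun x hx i hi => ?_⟩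
  rw [shift_iterate_apply]
  exact hx _ (hAB i hi)

lemma exists_card_le_add_forall_add_mem (A : Finset ℤ) :
    ∃ L : ℕ, ∀ n : ℕ, ∃ B : Finset ℤ, B.card ≤ n + L ∧ ∀ k < n, ∀ i ∈ A, i + k ∈ B := by
  obtain ⟨l, hl⟩ := A.bddBelow
  obtain ⟨u, hu⟩ := A.bddAbove
  refine ⟨(u + 1 - l).toNat, fun n => ⟨Finset.Ico l (u + 1 + n), ?_, fun k hk i hi => ?_⟩⟩
  · rw [Int.card_Ico]
    omega
  · have hli : l ≤ i := hl hi
    have hiu : i ≤ u := hu hi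
    rw [Finset.mem_Ico]
    omega

lemma mesh_dynDist_le {E : Type*} {d : E → E → ℝ} {T : E → E} {n : ℕ} {α : Set (Set E)} {ε : ℝ}
    (hε : 0 ≤ ε) (h : ∀ U ∈ α, ∀ x ∈ U, ∀ y ∈ U, ∀ i < n, d (T^[i] x) (T^[i] y) ≤ ε) :
    mesh (dynDist d T n) α ≤ ε := by
  refine Real.sSup_le ?_ hε
  rintro _ ⟨U, hU, rfl⟩
  refine Real.sSup_le ?_ hε
  rintro _ ⟨x, hx, y, hy, rfl⟩
  refine Real.sSup_le ?_ hε
  rintro _ ⟨i, hi, rfl⟩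
  exact h U hU x hx y hy i hi

variable [TopologicalSpace K] [CompactSpace K] [NormalSpace K]

theorem exists_forall_widim_dynDist_shift_le {d : (ℤ → K) → (ℤ → K) → ℝ}
    (hd : Continuous fun p : (ℤ → K) × (ℤ → K) => d p.1 p.2) (hd_self : ∀ x, d x x = 0)
    {ε : ℝ} (hε : 0 < ε) :
    ∃ L : ℕ, ∀ n : ℕ, widim ε (dynDist d (shift K) n) ≤ ((n + L : ℕ) : ℕ∞) * topDim K := by
  obtain ⟨A, α, hα, hαd⟩ := exists_boxCover_prod_self_subset
    (D := {p | d p.1 p.2 < ε / 2}) (isOpen_lt hd continuous_const) fun x => by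
      simp [hd_self, hε]
  obtain ⟨L, hL⟩ := exists_card_le_add_forall_add_mem A
  refine ⟨L, fun n => ?_⟩
  obtain ⟨B, hB_card, hAB⟩ := hL n
  have hmesh : mesh (dynDist d (shift K) n) (boxCover B fun _ => α) ≤ ε / 2 := by
    refine mesh_dynDist_le (half_pos hε).le fun W hW x hx y hy k hk => ?_
    obtain ⟨W', hW', hmaps⟩ := exists_mem_boxCover_mapsTo_shift_iterate (hAB k hk) hW
    exact (hαd W' hW' (mk_mem_prod (hmaps hx) (hmaps hy))).le
  calc widim ε (dynDist d (shift K) n)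
      ≤ covD (boxCover (B : Set ℤ) fun _ => α) :=
        widim_le_covD (isOpenCover_boxCover B fun _ => hα) (hmesh.trans_lt (half_lt_self hε))
    _ ≤ B.card * covD α := covD_boxCover_const_le B hα
    _ ≤ ((n + L : ℕ) : ℕ∞) * topDim K :=
      mul_le_mul' (Nat.cast_le.2 hB_card) (covD_le_topDim hα)

theorem mdim_fullshift_le_general {d : (ℤ → K) → (ℤ → K) → ℝ}
    (hd : Continuous fun p : (ℤ → K) × (ℤ → K) => d p.1 p.2) (hd_self : ∀ x, d x x = 0) :
    mdim (shift K) d ≤ (topDim K : ℝ≥0∞) := by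
  refine iSup₂_le fun ε hε => ?_
  obtain ⟨L, hL⟩ := exists_forall_widim_dynDist_shift_le hd hd_self hε
  refine liminf_div_natCast_le (L := L) fun n => ?_
  exact_mod_cast ENat.toENNReal_le.2 (hL n)

end FullShift

/-- for every compact metric space `K`, the mean dimension of the full
shift on the alphabet `K` is at most `dim K`. -/
theorem mdim_fullshift_le {K : Type*} [MetricSpace K] [CompactSpace K]
    (d : (ℤ → K) → (ℤ → K) → ℝ) (hd : IsCompatMetric d) :
    mdim (shift K) d ≤ (topDim K : ℝ≥0∞) :=
  mdim_fullshift_le_general hd.continuous hd.refl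

end MeanDimPaper
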